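/- Greedy 2k-approximation for k-local valuations: Let 1 ≤ k ≤ m be integers and let v_1, …, v_n be normalized, nondecreasing, k-local valuations on subsets of [m]. Then there exists a collection {S_i}_{i∈[n]} of pairwise disjoint subsets of [m], each of size at most k, such that Σ_{i=1}^{n} v_i(S_i) ≥ (1/(2k)) · max over all partitions {T_i}_{i∈[n]} of [m] of Σ_{i=1}^{n} v_i(T_i). -/

import Mathlib

open Finset

/-- A valuation on `[m]`: normalized, nonnegative and nondecreasing. -/
def IsValuation {m : ℕ} (v : Finset (Fin m) → ℝ) : Prop :=
  v ∅ = 0 ∧ (∀ S, 0 ≤ v S) ∧ ∀ S T : Finset (Fin m), S ⊆ T → v S ≤ v T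

/-- A valuation is `k`-local if some bundle `T` of size `k` captures its value up to
an additive error of `v([m]) / (2m²)`. -/
def IsKLocal {m : ℕ} (k : ℕ) (v : Finset (Fin m) → ℝ) : Prop :=
  ∃ T : Finset (Fin m), T.card = k ∧
    ∀ S : Finset (Fin m), v S - (1 / (2 * (m : ℝ) ^ 2)) * v Finset.univ ≤ v (S ∩ T)

/-- `T` is a partition of `[m]` indexed by `[n]`. -/
def IsPartitionFam {m n : ℕ} (T : Fin n → Finset (Fin m)) : Prop :=
  (∀ i j : Fin n, i ≠ j → Disjoint (T i) (T j)) ∧ ∀ x : Fin m, ∃ i : Fin n, x ∈ T i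

/-- Greedy `2k`-approximation for `k`-local valuations. -/
theorem greedy_two_k_approx (m n k : ℕ) (hk1 : 1 ≤ k) (hkm : k ≤ m)
    (v : Fin n → Finset (Fin m) → ℝ)
    (hval : ∀ i, IsValuation (v i)) (hloc : ∀ i, IsKLocal k (v i)) :
    ∃ S : Fin n → Finset (Fin m),
      (∀ i j : Fin n, i ≠ j → Disjoint (S i) (S j)) ∧
      (∀ i, (S i).card ≤ k) ∧
      ∀ T : Fin n → Finset (Fin m), IsPartitionFam T →
        (1 / (2 * (k : ℝ))) * (∑ i : Fin n, v i (T i)) ≤ ∑ i : Fin n, v i (S i) := by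
  classical
  by_cases hne : ∃ T : Fin n → Finset (Fin m), IsPartitionFam T
  swap
  · refine ⟨fun _ => ∅, fun _ _ _ => by simp, fun _ => by simp, fun T hT => absurd ⟨T, hT⟩ hne⟩
  obtain ⟨T, hT, hmax⟩ := Set.exists_max_image
    {T : Fin n → Finset (Fin m) | IsPartitionFam T} (fun T => ∑ i, v i (T i))
    (Set.toFinite _) hne
  simp only [Set.mem_setOf_eq] at hT hmax
  choose A hA hloc using hloc
  set O := ∑ i, v i (T i) with hO
  have hO0 : 0 ≤ O := Finset.sum_nonneg fun i _ => (hval i).2.1 _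
  have hm1 : (1 : ℝ) ≤ m := by exact_mod_cast hk1.trans hkm
  have hk1' : (1 : ℝ) ≤ k := by exact_mod_cast hk1
  have huniv : ∀ i, v i Finset.univ ≤ O := by
    intro i
    have hp : IsPartitionFam (fun j : Fin n => if j = i then (Finset.univ : Finset (Fin m)) else ∅) := by
      refine ⟨?_, fun x => ⟨i, by simp⟩⟩
      intro a b hab
      by_cases ha : a = i
      · have hb : b ≠ i := fun h => hab (ha.trans h.symm)
        simp [hb]
      · simp [ha]
    refine le_trans ?_ (hmax _ hp)
    refine le_trans ?_ (Finset.single_le_sum (fun j _ => (hval j).2.1 _) (Finset.mem_univ i))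
    simp
  have hcard : ∑ i, ((T i).card : ℝ) ≤ m := by
    have h : ∑ i, (T i).card = (Finset.univ.biUnion T).card :=
      (Finset.card_biUnion (fun i _ j _ hij => hT.1 i j hij)).symm
    have h2 : (Finset.univ.biUnion T).card ≤ m := by
      simpa using Finset.card_le_univ (Finset.univ.biUnion T)
    exact_mod_cast h.le.trans h2
  have hc0 : 0 ≤ 1 / (2 * (m : ℝ) ^ 2) := by positivity
  have hi : ∀ i, v i (T i) - (T i).card * (1 / (2 * (m : ℝ) ^ 2) * O) ≤ v i (T i ∩ A i) := by
    intro i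
    rcases (T i).eq_empty_or_nonempty with h | h
    · simp [h]
    · have h1 : (1 : ℝ) ≤ (T i).card := by exact_mod_cast h.card_pos
      have h2 := hloc i (T i)
      have h3 := mul_le_mul_of_nonneg_left (huniv i) hc0
      have h4 := mul_le_mul_of_nonneg_right h1 (mul_nonneg hc0 hO0)
      linarith
  have hsum := Finset.sum_le_sum (fun i (_ : i ∈ Finset.univ) => hi i)
  rw [Finset.sum_sub_distrib, ← Finset.sum_mul] at hsum
  have h5 := mul_le_mul_of_nonneg_right hcard (mul_nonneg hc0 hO0)
  have h6 : (m : ℝ) * (1 / (2 * (m : ℝ) ^ 2) * O) ≤ O / 2 := by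
    have : (m : ℝ) * (1 / (2 * (m : ℝ) ^ 2) * O) = (O / 2) / m := by
      field_simp
    rw [this]
    exact div_le_self (by positivity) hm1
  refine ⟨fun i => T i ∩ A i, ?_, ?_, ?_⟩
  · intro i j hij
    exact (hT.1 i j hij).mono Finset.inter_subset_left Finset.inter_subset_left
  · intro i
    exact (Finset.card_le_card Finset.inter_subset_right).trans (hA i).le
  · intro T' hT'
    have h7 := mul_le_mul_of_nonneg_left (hmax T' hT') (show 0 ≤ 1 / (2 * (k : ℝ)) by positivity)
    have h8 : 1 / (2 * (k : ℝ)) * O ≤ O / 2 := by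
      have : 1 / (2 * (k : ℝ)) * O = (O / 2) / k := by field_simp
      rw [this]
      exact div_le_self (by positivity) hk1'
    linarith
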